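/- arXiv:2202.01958 — 2 statements merged into one kernel-verified Lean document; each statement's English description precedes it below -/
import Mathlib

section
/- PAC-Bayes-λ bound (Theorem 2 / Thiemann et al.): Let Z be a measurable space, D a probability measure on Z, H a measurable space of hypotheses, and ℓ : H × Z → [0,1] a measurable loss. Let Q₀ be a probability measure on H, n ≥ 1, δ ∈ (0,1]. Then with probability at least 1 − δ over an i.i.d. sample S = (z₁,…,zₙ) drawn from Dⁿ, simultaneously for every probability measure Q on H and every λ̄ ∈ (0,2): R_D(Q) ≤ R̂_S(Q)/(1 − λ̄/2) + (KL(Q ‖ Q₀) + log(2√n/δ)) / (n·λ̄·(1 − λ̄/2)), where R̂_S(Q) = E_{h∼Q}[(1/n) Σ_{i=1}^n ℓ(h, z_i)] and R_D(Q) = E_{h∼Q} E_{z∼D}[ℓ(h, z)]. -/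
open MeasureTheory ProbabilityTheory
open scoped Classical

/-- The Kullback–Leibler divergence between measures `Q` and `Q₀`, taken to be `+∞` when
`Q` is not absolutely continuous with respect to `Q₀` (or the log-density is not integrable). -/
noncomputable def klDiv {α : Type*} [MeasurableSpace α] (Q Q₀ : Measure α) : ENNReal :=
  if Q ≪ Q₀ ∧ Integrable (fun a => Real.log (Q.rnDeriv Q₀ a).toReal) Q
  then ENNReal.ofReal (∫ a, Real.log (Q.rnDeriv Q₀ a).toReal ∂Q)
  else ⊤

/-!
The proof is by the method of mixtures. Let `R` and `R̂` be the risk and the empirical risk of a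
hypothesis. Since `exp (-x) ≤ 1 - x + x² / 2` for `x ≥ 0` and the second moment of the loss is at
most `R`, independence gives `𝔼 exp (n (l (R - R̂) - l² R / 2)) ≤ 1` for every fixed `l ≥ 0`. The
same then holds, with `2√n` in place of `1`, after integrating over `l` against a measure of mass
`2√n`. For a given sample, the exponent is a concave parabola in `l` with curvature at most `n`
and, when `R̂ < R`, with vertex in `[0, 1]`. An interval of length `1 / √n` around the vertex thus
carries enough mass for the mixture to dominate `exp (n (lam (R - R̂) - lam² R / 2))` for all
`lam ≥ 0` at once. Markov's inequality bounds the `Q₀`-average of the mixture by `2√n / δ` with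
probability at least `1 - δ`, and the Donsker–Varadhan inequality transfers this bound to every `Q`.
-/

lemma exp_neg_le_quadratic_of_nonneg {x : ℝ} (hx : 0 ≤ x) :
    Real.exp (-x) ≤ 1 - x + x ^ 2 / 2 := by
  rw [Real.exp_neg, inv_le_iff_one_le_mul₀ (Real.exp_pos x)]
  calc (1 : ℝ) ≤ (1 - x + x ^ 2 / 2) * (1 + x + x ^ 2 / 2) := by nlinarith [sq_nonneg (x ^ 2)]
    _ ≤ (1 - x + x ^ 2 / 2) * Real.exp x := by
      gcongr
      · nlinarith [sq_nonneg (x - 1)]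
      · exact Real.quadratic_le_exp_of_nonneg hx

lemma five_sixths_mul_le_integral_one_sub_sq {m s : ℝ} (hm : m ∈ Set.Icc (0 : ℝ) 1) (hs : 0 < s) :
    5 / 6 * s ≤ ∫ l in (m - s * m)..(m - s * m + s), (1 - ((l - m) / s) ^ 2 / 2) := by
  have rescaled : ∫ l in (m - s * m)..(m - s * m + s), (1 - ((l - m) / s) ^ 2 / 2) =
      s * ∫ t in (0 - m)..(1 - m), (1 - t ^ 2 / 2) := by
    rw [intervalIntegral.integral_comp_sub_right (fun l => 1 - (l / s) ^ 2 / 2),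
      intervalIntegral.integral_comp_div (fun t => 1 - t ^ 2 / 2) hs.ne', smul_eq_mul]
    congr 2 <;> field_simp <;> ring
  have primitive : ∫ t in (0 - m)..(1 - m), (1 - t ^ 2 / 2) = 1 - (1 - 3 * (m * (1 - m))) / 6 := by
    rw [intervalIntegral.integral_sub (by simp) (by apply Continuous.intervalIntegrable; fun_prop),
      intervalIntegral.integral_div, integral_pow, intervalIntegral.integral_const, smul_eq_mul]
    push_cast
    ring
  rw [rescaled, primitive, mul_comm]
  gcongr
  linarith [mul_nonneg hm.1 (sub_nonneg.2 hm.2)]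

lemma exp_peak_mul_one_sub_le {c v s m : ℝ} (hvc : v ≤ c) (hs : c * s ^ 2 = 1) (l : ℝ) :
    Real.exp (m ^ 2 * v / 2) * (1 - ((l - m) / s) ^ 2 / 2) ≤
      Real.exp (l * (m * v) - l ^ 2 * v / 2) := by
  have hs0 : s ≠ 0 := by rintro rfl; simp at hs
  have curvature : v * (l - m) ^ 2 ≤ ((l - m) / s) ^ 2 := by
    rw [div_pow, le_div_iff₀ (by positivity)]
    calc v * (l - m) ^ 2 * s ^ 2 ≤ c * (l - m) ^ 2 * s ^ 2 := by gcongr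
      _ = (l - m) ^ 2 := by linear_combination (l - m) ^ 2 * hs
  rw [show l * (m * v) - l ^ 2 * v / 2 = m ^ 2 * v / 2 + -(v * (l - m) ^ 2 / 2) by ring,
    Real.exp_add]
  gcongr
  linarith [Real.one_sub_le_exp_neg (v * (l - m) ^ 2 / 2)]

lemma exp_peak_mul_le_integral_exp {c v m : ℝ} (hc : 1 ≤ c) (hvc : v ≤ c)
    (hm : m ∈ Set.Icc (0 : ℝ) 1) :
    Real.exp (m ^ 2 * v / 2) * (5 / 6 * (√c)⁻¹) ≤
      ∫ l in (0 : ℝ)..1, Real.exp (l * (m * v) - l ^ 2 * v / 2) := by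
  -- Integrate over the interval of length `s` that `m` divides in the ratio `m : 1 - m`: it stays
  -- inside `[0, 1]`.
  set s := (√c)⁻¹
  have hs0 : 0 < s := by positivity
  have hs1 : s ≤ 1 := inv_le_one_of_one_le₀ (Real.one_le_sqrt.2 hc)
  have hcs : c * s ^ 2 = 1 := by
    rw [inv_pow, Real.sq_sqrt (by linarith), mul_inv_cancel₀ (by linarith)]
  calc Real.exp (m ^ 2 * v / 2) * (5 / 6 * s)
      ≤ Real.exp (m ^ 2 * v / 2) *
          ∫ l in (m - s * m)..(m - s * m + s), (1 - ((l - m) / s) ^ 2 / 2) := by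
        gcongr
        exact five_sixths_mul_le_integral_one_sub_sq hm hs0
    _ ≤ ∫ l in (m - s * m)..(m - s * m + s), Real.exp (l * (m * v) - l ^ 2 * v / 2) := by
        rw [← intervalIntegral.integral_const_mul]
        apply intervalIntegral.integral_mono_on (by linarith)
        · apply Continuous.intervalIntegrable; fun_prop
        · apply Continuous.intervalIntegrable; fun_prop
        · exact fun l _ => exp_peak_mul_one_sub_le hvc hcs l
    _ ≤ ∫ l in (0 : ℝ)..1, Real.exp (l * (m * v) - l ^ 2 * v / 2) := by
        apply intervalIntegral.integral_mono_interval
        · nlinarith [hm.1]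
        · linarith
        · nlinarith [hm.2]
        · exact .of_forall fun _ => (Real.exp_pos _).le
        · apply Continuous.intervalIntegrable; fun_prop

lemma exp_le_one_add_mul_exp_mul {c y : ℝ} (hc : 1 ≤ c) (hy : y ≤ c / 2) :
    Real.exp y ≤ 1 + (2 * √c - 1) * (Real.exp y * (5 / 6 * (√c)⁻¹)) := by
  have hr : 1 ≤ √c := Real.one_le_sqrt.2 hc
  have hrc : √c ^ 2 = c := Real.sq_sqrt (by linarith)
  have hE := Real.exp_pos y
  have expand : (2 * √c - 1) * (Real.exp y * (5 / 6 * (√c)⁻¹)) =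
      Real.exp y * (5 / 3 - 5 / 6 * (√c)⁻¹) := by field_simp; ring
  rw [expand]
  -- The last factor is at least `1` once `5 / 4 ≤ √c`; below that it is at least `5 / 6`, and the
  -- summand `1` makes up for the missing `exp y / 6 ≤ exp 1 / 6`.
  rcases le_total (5 / 4) (√c) with large | small
  · have : (√c)⁻¹ ≤ (5 / 4)⁻¹ := by gcongr
    nlinarith
  · have : Real.exp y ≤ Real.exp 1 := Real.exp_le_exp.2 (by nlinarith)
    have : (√c)⁻¹ ≤ 1 := inv_le_one_of_one_le₀ hr
    nlinarith [Real.exp_one_lt_three]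

lemma exp_le_one_add_mul_integral_exp {c v b x : ℝ} (hc : 1 ≤ c) (hv : v ∈ Set.Icc 0 c)
    (hbv : b ≤ v) (hx : 0 ≤ x) :
    Real.exp (x * b - x ^ 2 * v / 2) ≤
      1 + (2 * √c - 1) * ∫ l in (0 : ℝ)..1, Real.exp (l * b - l ^ 2 * v / 2) := by
  have weight_nonneg : 0 ≤ 2 * √c - 1 := by linarith [Real.one_le_sqrt.2 hc]
  rcases le_or_gt b 0 with hb | hb
  · have exponent_nonpos : x * b - x ^ 2 * v / 2 ≤ 0 := by
      nlinarith [mul_nonneg (sq_nonneg x) hv.1]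
    have average_nonneg : 0 ≤ ∫ l in (0 : ℝ)..1, Real.exp (l * b - l ^ 2 * v / 2) :=
      intervalIntegral.integral_nonneg zero_le_one fun _ _ => (Real.exp_pos _).le
    linarith [Real.exp_le_one_iff.2 exponent_nonpos, mul_nonneg weight_nonneg average_nonneg]
  obtain ⟨m, hm, rfl⟩ : ∃ m ∈ Set.Icc (0 : ℝ) 1, b = m * v := by
    have hv0 : 0 < v := hb.trans_le hbv
    exact ⟨b / v, ⟨by positivity, (div_le_one hv0).2 hbv⟩, by field_simp⟩
  have peak_le : m ^ 2 * v / 2 ≤ c / 2 := by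
    have := mul_le_of_le_one_left hv.1 (pow_le_one₀ (n := 2) hm.1 hm.2)
    linarith [hv.2]
  calc Real.exp (x * (m * v) - x ^ 2 * v / 2) ≤ Real.exp (m ^ 2 * v / 2) :=
        Real.exp_le_exp.2 (by nlinarith [mul_nonneg hv.1 (sq_nonneg (x - m))])
    _ ≤ 1 + (2 * √c - 1) * (Real.exp (m ^ 2 * v / 2) * (5 / 6 * (√c)⁻¹)) :=
        exp_le_one_add_mul_exp_mul hc peak_le
    _ ≤ _ := by
        gcongr
        exact exp_peak_mul_le_integral_exp hc hv.2 hm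

/-- The unnormalised prior over the tuning parameter in the method of mixtures: a unit atom at `0`,
for the samples on which the empirical risk exceeds the risk, and a uniform part on `[0, 1]`. The
latter is weighted so that the total mass is `2 * √c` for `1 ≤ c`, the numerator in the logarithm of
the PAC-Bayes-λ bound. -/
noncomputable def mixingMeasure (c : ℝ) : Measure ℝ :=
  Measure.dirac 0 + ENNReal.ofReal (2 * √c - 1) • volume.restrict (Set.Ioc 0 1)

instance (c : ℝ) : SFinite (mixingMeasure c) := by
  unfold mixingMeasure
  infer_instance

lemma mixingMeasure_univ {c : ℝ} (hc : 1 ≤ c) :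
    mixingMeasure c Set.univ = ENNReal.ofReal (2 * √c) := by
  have weight_nonneg : 0 ≤ 2 * √c - 1 := by linarith [Real.one_le_sqrt.2 hc]
  calc mixingMeasure c Set.univ = 1 + ENNReal.ofReal (2 * √c - 1) := by simp [mixingMeasure]
    _ = ENNReal.ofReal (2 * √c) := by
      rw [← ENNReal.ofReal_one, ← ENNReal.ofReal_add zero_le_one weight_nonneg, add_sub_cancel]

lemma ae_nonneg_mixingMeasure (c : ℝ) : ∀ᵐ l ∂mixingMeasure c, 0 ≤ l := by
  refine ae_add_measure_iff.2 ⟨by simp [ae_dirac_eq], Measure.ae_smul_measure ?_ _⟩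
  exact (ae_restrict_mem measurableSet_Ioc).mono fun l hl => hl.1.le

lemma lintegral_mixingMeasure {c : ℝ} (hc : 1 ≤ c) {g : ℝ → ℝ} (hg : Continuous g)
    (hg0 : ∀ l, 0 ≤ g l) :
    ∫⁻ l, ENNReal.ofReal (g l) ∂mixingMeasure c =
      ENNReal.ofReal (g 0 + (2 * √c - 1) * ∫ l in (0 : ℝ)..1, g l) := by
  have weight_nonneg : 0 ≤ 2 * √c - 1 := by linarith [Real.one_le_sqrt.2 hc]
  have average_nonneg : 0 ≤ ∫ l in (0 : ℝ)..1, g l :=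
    intervalIntegral.integral_nonneg zero_le_one fun l _ => hg0 l
  rw [mixingMeasure, lintegral_add_measure, lintegral_dirac, lintegral_smul_measure, smul_eq_mul,
    ← ofReal_integral_eq_lintegral_ofReal hg.integrableOn_Ioc (.of_forall hg0),
    ← intervalIntegral.integral_of_le zero_le_one, ← ENNReal.ofReal_mul weight_nonneg,
    ← ENNReal.ofReal_add (hg0 0) (by positivity)]

lemma exp_le_lintegral_mixingMeasure {c v b x : ℝ} (hc : 1 ≤ c) (hv : v ∈ Set.Icc 0 c)
    (hbv : b ≤ v) (hx : 0 ≤ x) :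
    ENNReal.ofReal (Real.exp (x * b - x ^ 2 * v / 2)) ≤
      ∫⁻ l, ENNReal.ofReal (Real.exp (l * b - l ^ 2 * v / 2)) ∂mixingMeasure c := by
  rw [lintegral_mixingMeasure hc (by fun_prop) fun _ => (Real.exp_pos _).le]
  exact ENNReal.ofReal_le_ofReal (by simpa using exp_le_one_add_mul_integral_exp hc hv hbv hx)

lemma integral_le_integral_llr_add_log_integral_exp {α : Type*} [MeasurableSpace α]
    {Q Q₀ : Measure α} [IsProbabilityMeasure Q] [SigmaFinite Q₀] (hQ : Q ≪ Q₀)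
    (hllr : Integrable (llr Q Q₀) Q) {f : α → ℝ} (hfQ : Integrable f Q)
    (hfQ₀ : Integrable (fun a => Real.exp (f a)) Q₀) :
    ∫ a, f a ∂Q ≤ ∫ a, llr Q Q₀ a ∂Q + Real.log (∫ a, Real.exp (f a) ∂Q₀) := by
  have : NeZero Q₀ := ⟨fun h => IsProbabilityMeasure.ne_zero Q (by simpa [h] using hQ)⟩
  have := isProbabilityMeasure_tilted hfQ₀
  have gibbs := InformationTheory.integral_llr_add_sub_measure_univ_nonneg
    (hQ.trans (absolutelyContinuous_tilted hfQ₀)) (integrable_llr_tilted_right hQ hfQ hllr hfQ₀)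
  rw [integral_llr_tilted_right hQ hfQ hfQ₀ hllr] at gibbs
  simp only [probReal_univ] at gibbs
  linarith

lemma ofReal_integral_le_klDiv_add_log {α : Type*} [MeasurableSpace α]
    {Q Q₀ : Measure α} [IsProbabilityMeasure Q] [SigmaFinite Q₀] {f : α → ℝ} {K : ℝ}
    (hfQ : Integrable f Q) (hfQ₀ : AEMeasurable f Q₀)
    (hK : ∫⁻ a, ENNReal.ofReal (Real.exp (f a)) ∂Q₀ ≤ ENNReal.ofReal K) :
    ENNReal.ofReal (∫ a, f a ∂Q) ≤ klDiv Q Q₀ + ENNReal.ofReal (Real.log K) := by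
  by_cases hkl : Q ≪ Q₀ ∧ Integrable (llr Q Q₀) Q
  swap
  · simp [klDiv, ← llr_def, hkl]
  obtain ⟨hQ, hllr⟩ := hkl
  have : NeZero Q₀ := ⟨fun h => IsProbabilityMeasure.ne_zero Q (by simpa [h] using hQ)⟩
  have exp_nonneg : 0 ≤ᵐ[Q₀] fun a => Real.exp (f a) := .of_forall fun _ => (Real.exp_pos _).le
  have hexp : Integrable (fun a => Real.exp (f a)) Q₀ :=
    (lintegral_ofReal_ne_top_iff_integrable (by fun_prop) exp_nonneg).1
      (hK.trans_lt ENNReal.ofReal_lt_top).ne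
  have exp_pos : 0 < ∫ a, Real.exp (f a) ∂Q₀ := integral_exp_pos hexp
  have hexpK : ∫ a, Real.exp (f a) ∂Q₀ ≤ K := by
    rw [← ofReal_integral_eq_lintegral_ofReal hexp exp_nonneg] at hK
    exact (ENNReal.ofReal_le_ofReal_iff' .. |>.1 hK).resolve_right exp_pos.not_ge
  calc ENNReal.ofReal (∫ a, f a ∂Q)
      ≤ ENNReal.ofReal (∫ a, llr Q Q₀ a ∂Q + Real.log K) := by
        gcongr
        exact (integral_le_integral_llr_add_log_integral_exp hQ hllr hfQ hexp).trans (by gcongr)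
    _ ≤ ENNReal.ofReal (∫ a, llr Q Q₀ a ∂Q) + ENNReal.ofReal (Real.log K) :=
        ENNReal.ofReal_add_le
    _ = klDiv Q Q₀ + ENNReal.ofReal (Real.log K) := by
        simp only [klDiv, ← llr_def, hQ, hllr, and_self, if_true]

lemma ofReal_one_sub_le_measure_lintegral_le {Ω α : Type*} [MeasurableSpace Ω] [MeasurableSpace α]
    {P : Measure Ω} {Q₀ : Measure α} [IsProbabilityMeasure P] [IsProbabilityMeasure Q₀]
    {G : Ω → α → ENNReal} (hG : Measurable (Function.uncurry G)) {C δ : ℝ} (hC : 0 < C)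
    (hδ : 0 < δ) (hGC : ∀ a, ∫⁻ ω, G ω a ∂P ≤ ENNReal.ofReal C) :
    ENNReal.ofReal (1 - δ) ≤ P {ω | ∫⁻ a, G ω a ∂Q₀ ≤ ENNReal.ofReal (C / δ)} := by
  have hmeas : Measurable fun ω => ∫⁻ a, G ω a ∂Q₀ := hG.lintegral_prod_right'
  have mean_le : ∫⁻ ω, ∫⁻ a, G ω a ∂Q₀ ∂P ≤ ENNReal.ofReal C := by
    rw [lintegral_lintegral_swap hG.aemeasurable]
    exact (lintegral_mono hGC).trans (by simp)
  have markov : P {ω | ENNReal.ofReal (C / δ) ≤ ∫⁻ a, G ω a ∂Q₀} ≤ ENNReal.ofReal δ := by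
    refine (meas_ge_le_lintegral_div hmeas.aemeasurable (ENNReal.ofReal_pos.2 (by positivity)).ne'
      ENNReal.ofReal_ne_top).trans ?_
    grw [mean_le]
    rw [← ENNReal.ofReal_div_of_pos (by positivity), div_div_cancel₀ hC.ne']
  calc ENNReal.ofReal (1 - δ)
      ≤ 1 - P {ω | ENNReal.ofReal (C / δ) ≤ ∫⁻ a, G ω a ∂Q₀} := by
        rw [ENNReal.ofReal_sub _ hδ.le, ENNReal.ofReal_one]
        gcongr
    _ = P {ω | ENNReal.ofReal (C / δ) ≤ ∫⁻ a, G ω a ∂Q₀}ᶜ :=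
        (prob_compl_eq_one_sub (measurableSet_le measurable_const hmeas)).symm
    _ ≤ P {ω | ∫⁻ a, G ω a ∂Q₀ ≤ ENNReal.ofReal (C / δ)} :=
        measure_mono fun _ hω => (not_le.1 (Set.notMem_ofPred_iff.1 hω)).le

lemma ofReal_le_ofReal_add_div {r s d : ℝ} {X : ENNReal} (hd : 0 < d)
    (h : ENNReal.ofReal (d * (r - s)) ≤ X) :
    ENNReal.ofReal r ≤ ENNReal.ofReal s + X / ENNReal.ofReal d :=
  calc ENNReal.ofReal r = ENNReal.ofReal (s + d * (r - s) / d) := by congr 1; field_simp; ring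
    _ ≤ ENNReal.ofReal s + ENNReal.ofReal (d * (r - s)) / ENNReal.ofReal d := by
      rw [← ENNReal.ofReal_div_of_pos hd]
      exact ENNReal.ofReal_add_le
    _ ≤ ENNReal.ofReal s + X / ENNReal.ofReal d := by gcongr

section Sample

variable {Z : Type*} [MeasurableSpace Z] {D : Measure Z}

lemma lintegral_exp_neg_mul_le [IsProbabilityMeasure D] {f : Z → ℝ} (hf0 : 0 ≤ᵐ[D] f)
    (hf2 : MemLp f 2 D) {l : ℝ} (hl : 0 ≤ l) :
    ∫⁻ z, ENNReal.ofReal (Real.exp (-(l * f z))) ∂D ≤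
      ENNReal.ofReal (Real.exp (-(l * ∫ z, f z ∂D) + l ^ 2 * (∫ z, f z ^ 2 ∂D) / 2)) := by
  have hlin : Integrable (fun z => 1 - l * f z) D :=
    (integrable_const 1).sub ((hf2.integrable one_le_two).const_mul l)
  have hquad : Integrable (fun z => l ^ 2 * f z ^ 2 / 2) D :=
    (hf2.integrable_sq.const_mul (l ^ 2)).div_const 2
  have exp_le : ∀ᵐ z ∂D, Real.exp (-(l * f z)) ≤ 1 - l * f z + l ^ 2 * f z ^ 2 / 2 := by
    filter_upwards [hf0] with z hz
    simpa only [mul_pow] using exp_neg_le_quadratic_of_nonneg (mul_nonneg hl hz)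
  calc ∫⁻ z, ENNReal.ofReal (Real.exp (-(l * f z))) ∂D
      ≤ ∫⁻ z, ENNReal.ofReal (1 - l * f z + l ^ 2 * f z ^ 2 / 2) ∂D :=
        lintegral_mono_ae (exp_le.mono fun _ hz => ENNReal.ofReal_le_ofReal hz)
    _ = ENNReal.ofReal (∫ z, (1 - l * f z + l ^ 2 * f z ^ 2 / 2) ∂D) :=
        (ofReal_integral_eq_lintegral_ofReal (hlin.add hquad)
          (exp_le.mono fun _ hz => (Real.exp_pos _).le.trans hz)).symm
    _ = ENNReal.ofReal (1 - l * ∫ z, f z ∂D + l ^ 2 * (∫ z, f z ^ 2 ∂D) / 2) := by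
        rw [integral_add hlin hquad,
          integral_sub (integrable_const 1) ((hf2.integrable one_le_two).const_mul l),
          integral_div, integral_const_mul, integral_const_mul]
        simp
    _ ≤ _ := by
        gcongr
        linarith [Real.add_one_le_exp (-(l * ∫ z, f z ∂D) + l ^ 2 * (∫ z, f z ^ 2 ∂D) / 2)]

lemma integral_le_one_of_integral_sq_le [IsProbabilityMeasure D] {f : Z → ℝ} (hf2 : MemLp f 2 D)
    (hsq : ∫ z, f z ^ 2 ∂D ≤ ∫ z, f z ∂D) : ∫ z, f z ∂D ≤ 1 := by
  have hvar : 0 ≤ ∫ z, f z ^ 2 ∂D - (∫ z, f z ∂D) ^ 2 :=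
    (variance_nonneg f D).trans_eq (variance_eq_sub hf2)
  nlinarith

lemma integral_sq_le_integral_of_mem_Icc [IsFiniteMeasure D] {f : Z → ℝ} (hf2 : MemLp f 2 D)
    (hf01 : ∀ᵐ z ∂D, f z ∈ Set.Icc (0 : ℝ) 1) : ∫ z, f z ^ 2 ∂D ≤ ∫ z, f z ∂D :=
  integral_mono_ae hf2.integrable_sq (hf2.integrable one_le_two) <|
    hf01.mono fun _ hz => pow_le_of_le_one hz.1 hz.2 two_ne_zero

variable {ι : Type*} [Fintype ι]

lemma integrable_const_mul_sum_of_mem_Icc [IsFiniteMeasure D] {f : ι → Z → ℝ} {a b : ℝ}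
    (hf : ∀ i, AEMeasurable (f i) D) (hfab : ∀ i, ∀ᵐ z ∂D, f i z ∈ Set.Icc a b) (c : ℝ) :
    Integrable (fun z => c * ∑ i, f i z) D :=
  (integrable_finsetSum _ fun i _ => .of_mem_Icc a b (hf i) (hfab i)).const_mul c

lemma lintegral_pi_prod_le_one [IsProbabilityMeasure D] {g : Z → ENNReal} (hg : Measurable g)
    (hg1 : ∫⁻ z, g z ∂D ≤ 1) : ∫⁻ S : ι → Z, ∏ i, g (S i) ∂(Measure.pi fun _ => D) ≤ 1 := by
  rw [lintegral_prod_eq_prod_lintegral_of_indepFun Finset.univ (fun i (S : ι → Z) => g (S i))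
    (iIndepFun_pi fun _ => hg.aemeasurable) fun i => hg.comp (measurable_pi_apply i)]
  refine Finset.prod_le_one' fun i _ => ?_
  rwa [(measurePreserving_eval (fun _ => D) i).lintegral_comp hg]

/-- The exponent, at parameter `l`, of the Chernoff factor for the lower tail of the sample sum of
`f`: `l` times the deviation of that sum below its mean, minus a quadratic term bounding the
logarithm of its Laplace transform. It is written as a sum over the sample, so that its exponential
is a product of independent factors. -/
noncomputable def deviationExponent (D : Measure Z) (S : ι → Z) (f : Z → ℝ) (l : ℝ) : ℝ :=
  ∑ i, (l * (∫ z, f z ∂D - f (S i)) - l ^ 2 * (∫ z, f z ∂D) / 2)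

lemma deviationExponent_eq (S : ι → Z) (f : Z → ℝ) (l : ℝ) :
    deviationExponent D S f l = l * ∑ i, (∫ z, f z ∂D - f (S i)) -
      l ^ 2 * (Fintype.card ι * ∫ z, f z ∂D) / 2 := by
  rw [deviationExponent, Finset.sum_sub_distrib, ← Finset.mul_sum, Finset.sum_const,
    Finset.card_univ, nsmul_eq_mul]
  ring

lemma deviationExponent_eq_mul_sub [Nonempty ι] (S : ι → Z) (f : Z → ℝ) {l : ℝ} (hl : l < 2) :
    deviationExponent D S f l = Fintype.card ι * l * (1 - l / 2) *
      (∫ z, f z ∂D - (Fintype.card ι : ℝ)⁻¹ * (∑ i, f (S i)) / (1 - l / 2)) := by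
  have card_ne_zero : (Fintype.card ι : ℝ) ≠ 0 := by simp
  have two_sub_ne_zero : 2 - l ≠ 0 := by linarith
  rw [deviationExponent_eq, Finset.sum_sub_distrib, Finset.sum_const, Finset.card_univ,
    nsmul_eq_mul]
  rw [show 1 - l / 2 = (2 - l) / 2 by ring]
  field_simp
  ring

lemma lintegral_exp_deviationExponent_le_one [IsProbabilityMeasure D] {f : Z → ℝ}
    (hf : Measurable f) (hf0 : 0 ≤ᵐ[D] f) (hf2 : MemLp f 2 D)
    (hsq : ∫ z, f z ^ 2 ∂D ≤ ∫ z, f z ∂D) {l : ℝ} (hl : 0 ≤ l) :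
    ∫⁻ S : ι → Z, ENNReal.ofReal (Real.exp (deviationExponent D S f l)) ∂(Measure.pi fun _ => D)
      ≤ 1 := by
  set p := ∫ z, f z ∂D
  have one_sample :
      ∫⁻ z, ENNReal.ofReal (Real.exp (l * (p - f z) - l ^ 2 * p / 2)) ∂D ≤ 1 := by
    calc ∫⁻ z, ENNReal.ofReal (Real.exp (l * (p - f z) - l ^ 2 * p / 2)) ∂D
        = ENNReal.ofReal (Real.exp (l * p - l ^ 2 * p / 2)) *
            ∫⁻ z, ENNReal.ofReal (Real.exp (-(l * f z))) ∂D := by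
          rw [← lintegral_const_mul _ (by fun_prop)]
          refine lintegral_congr fun z => ?_
          rw [← ENNReal.ofReal_mul (Real.exp_pos _).le, ← Real.exp_add]
          ring_nf
      _ ≤ ENNReal.ofReal (Real.exp (l * p - l ^ 2 * p / 2)) *
            ENNReal.ofReal (Real.exp (-(l * p) + l ^ 2 * p / 2)) := by
          grw [lintegral_exp_neg_mul_le hf0 hf2 hl, hsq]
      _ = 1 := by
          rw [← ENNReal.ofReal_mul (Real.exp_pos _).le, ← Real.exp_add]
          ring_nf
          simp
  simp only [deviationExponent, Real.exp_sum,
    ENNReal.ofReal_prod_of_nonneg fun _ _ => (Real.exp_pos _).le]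
  exact lintegral_pi_prod_le_one (by fun_prop) one_sample

lemma exp_deviationExponent_le_lintegral_mixingMeasure [Nonempty ι] {f : Z → ℝ} {S : ι → Z}
    (hmean : ∫ z, f z ∂D ∈ Set.Icc (0 : ℝ) 1) (hS : ∀ i, 0 ≤ f (S i)) {x : ℝ} (hx : 0 ≤ x) :
    ENNReal.ofReal (Real.exp (deviationExponent D S f x)) ≤
      ∫⁻ l, ENNReal.ofReal (Real.exp (deviationExponent D S f l))
        ∂mixingMeasure (Fintype.card ι) := by
  simp only [deviationExponent_eq]
  refine exp_le_lintegral_mixingMeasure ?_ ⟨?_, ?_⟩ ?_ hx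
  · exact_mod_cast Fintype.card_pos
  · exact mul_nonneg (Nat.cast_nonneg _) hmean.1
  · exact mul_le_of_le_one_right (Nat.cast_nonneg _) hmean.2
  · calc ∑ i, (∫ z, f z ∂D - f (S i)) ≤ ∑ _i : ι, ∫ z, f z ∂D :=
          Finset.sum_le_sum fun i _ => sub_le_self _ (hS i)
      _ = Fintype.card ι * ∫ z, f z ∂D := by simp

lemma lintegral_lintegral_exp_deviationExponent_le [IsProbabilityMeasure D] {f : Z → ℝ}
    (hf : Measurable f) (hf0 : 0 ≤ᵐ[D] f) (hf2 : MemLp f 2 D)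
    (hsq : ∫ z, f z ^ 2 ∂D ≤ ∫ z, f z ∂D) {μ : Measure ℝ} [SFinite μ] (hμ : ∀ᵐ l ∂μ, 0 ≤ l) :
    ∫⁻ S : ι → Z, ∫⁻ l, ENNReal.ofReal (Real.exp (deviationExponent D S f l)) ∂μ
      ∂(Measure.pi fun _ => D) ≤ μ Set.univ := by
  have hmeas : Measurable fun x : (ι → Z) × ℝ => deviationExponent D x.1 f x.2 := by
    unfold deviationExponent
    fun_prop
  rw [lintegral_lintegral_swap (by unfold Function.uncurry; fun_prop)]
  calc _ ≤ ∫⁻ _, 1 ∂μ := lintegral_mono_ae <| hμ.mono fun l hl =>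
        lintegral_exp_deviationExponent_le_one hf hf0 hf2 hsq hl
    _ = μ Set.univ := lintegral_one

section Hypotheses

variable {H : Type*} [MeasurableSpace H] {ℓ : H → Z → ℝ}

lemma measurable_deviationExponent [SFinite D] (hℓ : Measurable (Function.uncurry ℓ)) :
    Measurable fun x : ((ι → Z) × H) × ℝ => deviationExponent D x.1.1 (ℓ x.1.2) x.2 := by
  have hrisk : Measurable fun x : ((ι → Z) × H) × ℝ => ∫ z, ℓ x.1.2 z ∂D :=
    hℓ.stronglyMeasurable.integral_prod_right.measurable.comp (by fun_prop)
  refine Finset.measurable_fun_sum _ fun i _ => ?_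
  have hloss : Measurable fun x : ((ι → Z) × H) × ℝ => ℓ x.1.2 (x.1.1 i) :=
    hℓ.comp (f := fun x : ((ι → Z) × H) × ℝ => (x.1.2, x.1.1 i)) (by fun_prop)
  exact (measurable_snd.mul (hrisk.sub hloss)).sub (by fun_prop)

variable [Nonempty ι] {Q₀ : Measure H}

lemma ofReal_one_sub_le_measure_lintegral_exp_deviationExponent_le
    [IsProbabilityMeasure D] [IsProbabilityMeasure Q₀] (hℓ : Measurable (Function.uncurry ℓ))
    (hℓ0 : ∀ h, 0 ≤ᵐ[D] ℓ h) (hℓ2 : ∀ h, MemLp (ℓ h) 2 D)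
    (hℓsq : ∀ h, ∫ z, ℓ h z ^ 2 ∂D ≤ ∫ z, ℓ h z ∂D) {δ : ℝ} (hδ : 0 < δ) :
    ENNReal.ofReal (1 - δ) ≤ (Measure.pi fun _ : ι => D)
      {S | ∫⁻ h, ∫⁻ l, ENNReal.ofReal (Real.exp (deviationExponent D S (ℓ h) l))
        ∂mixingMeasure (Fintype.card ι) ∂Q₀ ≤ ENNReal.ofReal (2 * √(Fintype.card ι) / δ)} := by
  have hcard : (1 : ℝ) ≤ Fintype.card ι := by exact_mod_cast Fintype.card_pos
  refine ofReal_one_sub_le_measure_lintegral_le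
    (measurable_deviationExponent hℓ).exp.ennreal_ofReal.lintegral_prod_right'
    (by positivity) hδ fun h => ?_
  rw [← mixingMeasure_univ hcard]
  exact lintegral_lintegral_exp_deviationExponent_le hℓ.of_uncurry_left (hℓ0 h) (hℓ2 h) (hℓsq h)
    (ae_nonneg_mixingMeasure _)

lemma ofReal_integral_deviationExponent_le [SFinite D] [SigmaFinite Q₀] {Q : Measure H}
    [IsProbabilityMeasure Q]
    (hℓ : Measurable (Function.uncurry ℓ)) (hrisk : ∀ h, ∫ z, ℓ h z ∂D ∈ Set.Icc (0 : ℝ) 1)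
    {S : ι → Z} (hS : ∀ h i, 0 ≤ ℓ h (S i)) {K : ℝ}
    (hK : ∫⁻ h, ∫⁻ l, ENNReal.ofReal (Real.exp (deviationExponent D S (ℓ h) l))
      ∂mixingMeasure (Fintype.card ι) ∂Q₀ ≤ ENNReal.ofReal K)
    {x : ℝ} (hx : 0 ≤ x) (hint : Integrable (fun h => deviationExponent D S (ℓ h) x) Q) :
    ENNReal.ofReal (∫ h, deviationExponent D S (ℓ h) x ∂Q) ≤
      klDiv Q Q₀ + ENNReal.ofReal (Real.log K) := by
  have hmeas : Measurable fun h => deviationExponent D S (ℓ h) x :=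
    (measurable_deviationExponent hℓ).comp (f := fun h => ((S, h), x)) (by fun_prop)
  exact ofReal_integral_le_klDiv_add_log hint hmeas.aemeasurable <| hK.trans' <|
    lintegral_mono fun h =>
      exp_deviationExponent_le_lintegral_mixingMeasure (hrisk h) (hS h) hx

end Hypotheses

end Sample

-- Integrability of the empirical risk keeps its Bochner integral from being the junk value `0`.
theorem pac_bayes_lambda_bound_general
    {ι Z H : Type*} [Fintype ι] [Nonempty ι] [MeasurableSpace Z] [MeasurableSpace H]
    (D : Measure Z) [IsProbabilityMeasure D]
    (ℓ : H → Z → ℝ) (hℓmeas : Measurable (Function.uncurry ℓ)) (hℓ0 : ∀ h z, 0 ≤ ℓ h z)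
    (hℓ2 : ∀ h, MemLp (ℓ h) 2 D) (hℓsq : ∀ h, ∫ z, ℓ h z ^ 2 ∂D ≤ ∫ z, ℓ h z ∂D)
    (Q₀ : Measure H) [IsProbabilityMeasure Q₀] (δ : ℝ) (hδ : 0 < δ) :
    ENNReal.ofReal (1 - δ) ≤ (Measure.pi fun _ : ι => D)
      {S : ι → Z | ∀ Q : Measure H, IsProbabilityMeasure Q →
        Integrable (fun h => (Fintype.card ι : ℝ)⁻¹ * ∑ i, ℓ h (S i)) Q →
        ∀ lam : ℝ, lam ∈ Set.Ioo (0 : ℝ) 2 →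
          ENNReal.ofReal (∫ h, ∫ z, ℓ h z ∂D ∂Q)
            ≤ ENNReal.ofReal
                ((∫ h, (Fintype.card ι : ℝ)⁻¹ * ∑ i, ℓ h (S i) ∂Q) / (1 - lam / 2))
              + (klDiv Q Q₀ + ENNReal.ofReal (Real.log (2 * √(Fintype.card ι) / δ)))
                / ENNReal.ofReal (Fintype.card ι * lam * (1 - lam / 2))} := by
  have hrisk (h : H) : ∫ z, ℓ h z ∂D ∈ Set.Icc (0 : ℝ) 1 :=
    ⟨integral_nonneg (hℓ0 h), integral_le_one_of_integral_sq_le (hℓ2 h) (hℓsq h)⟩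
  refine (ofReal_one_sub_le_measure_lintegral_exp_deviationExponent_le (Q₀ := Q₀) hℓmeas
    (fun h => .of_forall (hℓ0 h)) hℓ2 hℓsq hδ).trans (measure_mono ?_)
  intro S hS Q _ hSQ lam ⟨hlam0, hlam2⟩
  have hriskQ : Integrable (fun h => ∫ z, ℓ h z ∂D) Q := .of_mem_Icc 0 1
    hℓmeas.stronglyMeasurable.integral_prod_right.measurable.aemeasurable (.of_forall hrisk)
  have hgap := (hriskQ.sub (hSQ.div_const (1 - lam / 2))).const_mul
    (Fintype.card ι * lam * (1 - lam / 2))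
  have hden : 0 < Fintype.card ι * lam * (1 - lam / 2) :=
    mul_pos (mul_pos (by exact_mod_cast Fintype.card_pos) hlam0) (by linarith)
  apply ofReal_le_ofReal_add_div hden
  rw [← integral_div, ← integral_sub hriskQ (hSQ.div_const _), ← integral_const_mul]
  simp only [Pi.sub_apply, ← deviationExponent_eq_mul_sub S _ hlam2] at hgap ⊢
  exact ofReal_integral_deviationExponent_le hℓmeas hrisk (fun h i => hℓ0 h (S i)) hS hlam0.le hgap

/-- PAC-Bayes-λ bound (Thiemann et al.): with probability at least `1 − δ` over an i.i.d.
sample `S ∼ Dⁿ`, simultaneously for every posterior probability measure `Q` and every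
`lam ∈ (0,2)`:
`R_D(Q) ≤ R̂_S(Q)/(1 − lam/2) + (KL(Q ‖ Q₀) + log(2√n/δ)) / (n·lam·(1 − lam/2))`. -/
theorem pac_bayes_lambda_bound
    {Z H : Type*} [MeasurableSpace Z] [MeasurableSpace H]
    (D : Measure Z) [IsProbabilityMeasure D]
    (ℓ : H → Z → ℝ) (hℓmeas : Measurable (Function.uncurry ℓ))
    (hℓ01 : ∀ h z, ℓ h z ∈ Set.Icc (0 : ℝ) 1)
    (Q₀ : Measure H) [IsProbabilityMeasure Q₀]
    (n : ℕ) (hn : 1 ≤ n) (δ : ℝ) (hδ : δ ∈ Set.Ioc (0 : ℝ) 1) :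
    (Measure.pi fun _ : Fin n => D)
      {S : Fin n → Z | ∀ Q : Measure H, IsProbabilityMeasure Q →
        ∀ lam : ℝ, lam ∈ Set.Ioo (0 : ℝ) 2 →
          ENNReal.ofReal (∫ h, ∫ z, ℓ h z ∂D ∂Q)
            ≤ ENNReal.ofReal ((∫ h, (n : ℝ)⁻¹ * ∑ i, ℓ h (S i) ∂Q) / (1 - lam / 2))
              + (klDiv Q Q₀ + ENNReal.ofReal (Real.log (2 * Real.sqrt n / δ)))
                / ENNReal.ofReal (n * lam * (1 - lam / 2)) }
      ≥ ENNReal.ofReal (1 - δ) := by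
  have : Nonempty (Fin n) := Fin.pos_iff_nonempty.1 hn
  have hℓ2 (h : H) : MemLp (ℓ h) 2 D :=
    memLp_of_bounded (.of_forall (hℓ01 h)) hℓmeas.of_uncurry_left.aestronglyMeasurable 2
  refine (pac_bayes_lambda_bound_general (ι := Fin n) D ℓ hℓmeas (fun h z => (hℓ01 h z).1) hℓ2
    (fun h => integral_sq_le_integral_of_mem_Icc (hℓ2 h) (.of_forall (hℓ01 h)))
    Q₀ δ hδ.1).trans (measure_mono fun S hS Q hQ lam hlam => ?_)
  simpa only [Fintype.card_fin] using hS Q hQ (integrable_const_mul_sum_of_mem_Icc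
    (fun _ => hℓmeas.of_uncurry_right.aemeasurable) (fun i => .of_forall fun h => hℓ01 h (S i)) _)
    lam hlam
end

section
/- Refined Pinsker inequality for binary KL: for all real numbers p̂, p with 0 ≤ p̂ ≤ p < 1 and p > 0, one has kl(p̂ ‖ p) ≥ (p − p̂)² / (2p). -/
/-- The binary Kullback–Leibler divergence between Bernoulli parameters `q` and `q'`
(with the convention `0 * log 0 = 0`, which holds automatically since `Real.log 0 = 0`). -/
noncomputable def binKl (q q' : ℝ) : ℝ :=
  q * Real.log (q / q') + (1 - q) * Real.log ((1 - q) / (1 - q'))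

/-!
For `p ≠ 0, 1` the binary divergence is a weighted sum of values of `klFun x = x log x + 1 - x`,
namely `binKl q p = p * klFun (q / p) + (1 - p) * klFun ((1 - q) / (1 - p))`.
The second summand is nonnegative. In the first, `q ≤ p` puts the argument in `[0, 1]`, where
`klFun` dominates its second-order Taylor polynomial `(1 - x) ^ 2 / 2` at `1`.
-/

open Real InformationTheory

lemma one_sub_sq_div_two_le_klFun {x : ℝ} (hx₀ : 0 ≤ x) (hx₁ : x ≤ 1) :
    (1 - x) ^ 2 / 2 ≤ klFun x := by
  rcases hx₀.eq_or_lt with rfl | hx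
  · norm_num [klFun_zero]
  -- At the nonpositive point `log x`, `sinh u ≤ u` reads `(x - x⁻¹) / 2 ≤ log x`.
  have h_log : (x - x⁻¹) / 2 ≤ log x :=
    sinh_log hx ▸ sinh_le_self_iff.2 (log_nonpos hx₀ hx₁)
  calc (1 - x) ^ 2 / 2 = x * ((x - x⁻¹) / 2) + 1 - x := by field_simp; ring
    _ ≤ x * log x + 1 - x := by gcongr
    _ = klFun x := (klFun_apply x).symm

lemma mul_klFun_div (x : ℝ) {y : ℝ} (hy : y ≠ 0) :
    y * klFun (x / y) = x * log (x / y) + y - x := by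
  rw [klFun_apply]
  linear_combination (log (x / y) - 1) * mul_div_cancel₀ x hy

lemma binKl_eq_add_klFun (q : ℝ) {p : ℝ} (hp₀ : p ≠ 0) (hp₁ : p ≠ 1) :
    binKl q p = p * klFun (q / p) + (1 - p) * klFun ((1 - q) / (1 - p)) := by
  rw [mul_klFun_div q hp₀, mul_klFun_div (1 - q) (sub_ne_zero.2 hp₁.symm), binKl]
  ring

/-- Refined Pinsker inequality for the binary KL divergence:
for `0 ≤ phat ≤ p < 1` with `p > 0`, `kl(phat ‖ p) ≥ (p − phat)² / (2p)`. -/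
theorem refined_pinsker_binKl (phat p : ℝ) (h0 : 0 ≤ phat) (hle : phat ≤ p)
    (hp1 : p < 1) (hp : 0 < p) :
    (p - phat) ^ 2 / (2 * p) ≤ binKl phat p := by
  have h_left : (1 - phat / p) ^ 2 / 2 ≤ klFun (phat / p) :=
    one_sub_sq_div_two_le_klFun (div_nonneg h0 hp.le) ((div_le_one hp).2 hle)
  have h_right : 0 ≤ klFun ((1 - phat) / (1 - p)) :=
    klFun_nonneg (div_nonneg (by linarith) (by linarith))
  calc (p - phat) ^ 2 / (2 * p) = p * ((1 - phat / p) ^ 2 / 2) := by field_simp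
    _ ≤ p * klFun (phat / p) := by gcongr
    _ ≤ p * klFun (phat / p) + (1 - p) * klFun ((1 - phat) / (1 - p)) :=
      le_add_of_nonneg_right (mul_nonneg (by linarith) h_right)
    _ = binKl phat p := (binKl_eq_add_klFun phat hp.ne' hp1.ne).symm
end
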